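/- arXiv:2303.05011 — 3 statements merged into one kernel-verified Lean document; each statement's English description precedes it below -/
import Mathlib

section
/- Let d be a positive natural number, let μ be a probability measure on [0,∞) with finite second moment m₂ = ∫₀^∞ t² dμ(t) < ∞, and let ξ : ℝ^d → [0,∞) be a measurable function that is bounded and Lebesgue-integrable. Then, with ψ(u) = e^{−u} − 1 + u, one has lim_{λ→∞} λ ∫_{ℝ^d} ∫₀^∞ ψ( ξ(x) t / λ^{1/2} ) dμ(t) dx = (m₂ / 2) ∫_{ℝ^d} ξ(x)² dx, where the outer integral is with respect to Lebesgue measure on ℝ^d and the limit is taken as the real parameter λ tends to infinity. (This is the analytic core of the Gaussian scaling limit of the Poisson shot-noise field with finite second moment of amplitudes.) -/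
open MeasureTheory Filter Real Topology

/-! By Fubini, the double integral is `∫ ψ(F / √λ)` over the product measure, where
`F (x, t) = ξ x * t` is nonnegative and square integrable. Since `ψ(u) = u² / 2 + o(u²)`, the
integrand `λ ψ(F / √λ)` tends pointwise to `F² / 2`; since `0 ≤ ψ(u) ≤ u² / 2` on `[0, ∞)`, it is
dominated by that same function for every `λ > 0`. -/

open scoped ENNReal
open Asymptotics

/-- The function `ψ(u) = e^{-u} - 1 + u`: the exponential `e^{-u}` minus its first-order Taylor
polynomial at `0`, which is the integrand of the log-Laplace functional of a centred Poisson shot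
noise. -/
noncomputable def compensatedExp (u : ℝ) : ℝ := exp (-u) - 1 + u

theorem measurable_compensatedExp : Measurable compensatedExp := by
  unfold compensatedExp
  fun_prop

theorem compensatedExp_nonneg (u : ℝ) : 0 ≤ compensatedExp u := by
  unfold compensatedExp
  linarith [one_sub_le_exp_neg u]

theorem compensatedExp_le_sq_div_two {u : ℝ} (hu : 0 ≤ u) : compensatedExp u ≤ u ^ 2 / 2 := by
  have hpos : 0 < 1 + u + u ^ 2 / 2 := by positivity
  have exp_neg_le : exp (-u) ≤ 1 - u + u ^ 2 / 2 :=
    calc exp (-u) = (exp u)⁻¹ := exp_neg u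
      _ ≤ (1 + u + u ^ 2 / 2)⁻¹ := inv_anti₀ hpos (quadratic_le_exp_of_nonneg hu)
      _ ≤ 1 - u + u ^ 2 / 2 := by
        rw [inv_le_iff_one_le_mul₀ hpos]
        -- The product equals `1 + u ^ 4 / 4`.
        nlinarith [sq_nonneg (u ^ 2)]
  unfold compensatedExp
  linarith

theorem compensatedExp_sub_sq_div_two_isLittleO :
    (fun u ↦ compensatedExp u - 1 / 2 * u ^ 2) =o[𝓝 0] fun u ↦ u ^ 2 := by
  have taylor := (exp_sub_sum_range_succ_isLittleO_pow 2).comp_tendsto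
    (continuous_neg.tendsto' (0 : ℝ) 0 neg_zero)
  refine taylor.congr (fun u ↦ ?_) fun u ↦ neg_sq u
  simp only [Function.comp_apply, Finset.sum_range_succ, Finset.sum_range_zero, Nat.factorial,
    compensatedExp]
  push_cast
  ring

section QuadraticScaling

variable {α : Type*} [MeasurableSpace α] {ν : Measure α} {φ : ℝ → ℝ} {f : α → ℝ} {a c C : ℝ}

theorem tendsto_mul_comp_div_sqrt
    (hφ : (fun u ↦ φ u - c * u ^ 2) =o[𝓝[≥] 0] fun u ↦ u ^ 2) (ha : 0 ≤ a) :
    Tendsto (fun r ↦ r * φ (a / √r)) atTop (𝓝 (c * a ^ 2)) := by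
  have div_sqrt_tendsto : Tendsto (fun r ↦ a / √r) atTop (𝓝[≥] 0) :=
    tendsto_nhdsWithin_iff.2 ⟨tendsto_sqrt_atTop.const_div_atTop a,
      .of_forall fun r ↦ div_nonneg ha (sqrt_nonneg r)⟩
  have mul_sq_div_sqrt : ∀ᶠ r in atTop, r * (a / √r) ^ 2 = a ^ 2 := by
    filter_upwards [eventually_gt_atTop 0] with r hr
    rw [div_pow, sq_sqrt hr.le, mul_div_cancel₀ _ hr.ne']
  have remainder : Tendsto (fun r ↦ r * (φ (a / √r) - c * (a / √r) ^ 2)) atTop (𝓝 0) :=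
    (isLittleO_one_iff ℝ).1 <|
      (((isBigO_refl id atTop).mul_isLittleO (hφ.comp_tendsto div_sqrt_tendsto)).congr' .rfl
        mul_sq_div_sqrt).trans_isBigO (isBigO_const_const _ one_ne_zero _)
  refine (zero_add (c * a ^ 2) ▸ remainder.add_const (c * a ^ 2)).congr' ?_
  filter_upwards [mul_sq_div_sqrt] with r hr
  linear_combination -c * hr

theorem integrable_comp_of_abs_le_mul_sq (hφ_meas : Measurable φ)
    (hφ_le : ∀ u, 0 ≤ u → |φ u| ≤ C * u ^ 2) (hf : MemLp f 2 ν) (hf_nonneg : 0 ≤ᵐ[ν] f) :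
    Integrable (fun x ↦ φ (f x)) ν :=
  (hf.integrable_sq.const_mul C).mono'
    (hφ_meas.comp_aemeasurable hf.aemeasurable).aestronglyMeasurable
    (hf_nonneg.mono fun x hx ↦ hφ_le (f x) hx)

theorem tendsto_mul_integral_comp_div_sqrt (hφ_meas : Measurable φ)
    (hφ : (fun u ↦ φ u - c * u ^ 2) =o[𝓝[≥] 0] fun u ↦ u ^ 2)
    (hφ_le : ∀ u, 0 ≤ u → |φ u| ≤ C * u ^ 2) (hf : MemLp f 2 ν) (hf_nonneg : 0 ≤ᵐ[ν] f) :
    Tendsto (fun r ↦ r * ∫ x, φ (f x / √r) ∂ν) atTop (𝓝 (c * ∫ x, f x ^ 2 ∂ν)) := by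
  simp only [← integral_const_mul]
  refine tendsto_integral_filter_of_dominated_convergence (fun x ↦ C * f x ^ 2)
    (.of_forall fun r ↦ ?_) ?_ (hf.integrable_sq.const_mul C)
    (hf_nonneg.mono fun x hx ↦ tendsto_mul_comp_div_sqrt hφ hx)
  · exact ((hφ_meas.comp_aemeasurable (hf.aemeasurable.div_const _)).const_mul
      r).aestronglyMeasurable
  · filter_upwards [eventually_gt_atTop 0] with r hr
    filter_upwards [hf_nonneg] with x hx
    calc ‖r * φ (f x / √r)‖ = r * |φ (f x / √r)| := by
          rw [norm_mul, norm_of_nonneg hr.le, norm_eq_abs]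
      _ ≤ r * (C * (f x / √r) ^ 2) := by
        gcongr
        exact hφ_le _ (div_nonneg hx (sqrt_nonneg r))
      _ = C * f x ^ 2 := by
        rw [div_pow, sq_sqrt hr.le]
        field_simp

end QuadraticScaling

section Lp

variable {α β E R : Type*} [MeasurableSpace α] [MeasurableSpace β] {ν : Measure α} {μ : Measure β}

theorem memLp_two_of_integrable_of_norm_le [NormedAddCommGroup E] {f : α → E} {B : ℝ}
    (hf : Integrable f ν) (hB : ∀ᵐ x ∂ν, ‖f x‖ ≤ B) : MemLp f 2 ν := by
  rw [memLp_two_iff_integrable_sq_norm hf.aestronglyMeasurable]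
  simp only [sq]
  exact hf.norm.bdd_mul hf.aestronglyMeasurable.norm (hB.mono fun x hx ↦ by rwa [norm_norm])

theorem memLp_mul_prod [NormedRing R] [NormMulClass R] [SFinite μ] {p : ℝ≥0∞}
    (hp_zero : p ≠ 0) (hp_top : p ≠ ∞) {f : α → R} {g : β → R} (hf : MemLp f p ν)
    (hg : MemLp g p μ) : MemLp (fun z : α × β ↦ f z.1 * g z.2) p (ν.prod μ) := by
  have meas : AEStronglyMeasurable (fun z : α × β ↦ f z.1 * g z.2) (ν.prod μ) :=
    hf.aestronglyMeasurable.comp_fst.mul hg.aestronglyMeasurable.comp_snd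
  rw [← integrable_norm_rpow_iff meas hp_zero hp_top]
  simp only [norm_mul, mul_rpow (norm_nonneg _) (norm_nonneg _)]
  exact (hf.integrable_norm_rpow hp_zero hp_top).mul_prod (hg.integrable_norm_rpow hp_zero hp_top)

theorem ae_nonneg_mul_prod [SFinite μ] {f : α → ℝ} {g : β → ℝ} (hf : 0 ≤ᵐ[ν] f)
    (hg : 0 ≤ᵐ[μ] g) : 0 ≤ᵐ[ν.prod μ] fun z : α × β ↦ f z.1 * g z.2 := by
  filter_upwards [Measure.quasiMeasurePreserving_fst.ae hf,
    Measure.quasiMeasurePreserving_snd.ae hg] with z hfz hgz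
  exact mul_nonneg hfz hgz

end Lp

theorem stmt_0_general {α β : Type*} [MeasurableSpace α] [MeasurableSpace β]
    {ν : Measure α} [SFinite ν] {μ : Measure β} [SFinite μ] {f : α → ℝ} {g : β → ℝ}
    (hf : MemLp f 2 ν) (hf_nonneg : 0 ≤ᵐ[ν] f) (hg : MemLp g 2 μ) (hg_nonneg : 0 ≤ᵐ[μ] g) :
    Tendsto (fun r ↦ r * ∫ x, ∫ t, compensatedExp (f x * g t / √r) ∂μ ∂ν) atTop
      (𝓝 ((∫ t, g t ^ 2 ∂μ) / 2 * ∫ x, f x ^ 2 ∂ν)) := by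
  have abs_le : ∀ u, 0 ≤ u → |compensatedExp u| ≤ 1 / 2 * u ^ 2 := fun u hu ↦ by
    rw [abs_of_nonneg (compensatedExp_nonneg u)]
    linarith [compensatedExp_le_sq_div_two hu]
  have mul_memLp := memLp_mul_prod two_ne_zero ENNReal.ofNat_ne_top hf hg
  have ae_mul_nonneg := ae_nonneg_mul_prod hf_nonneg hg_nonneg
  have iterated_eq (r : ℝ) : ∫ x, ∫ t, compensatedExp (f x * g t / √r) ∂μ ∂ν =
      ∫ z, compensatedExp (f z.1 * g z.2 / √r) ∂ν.prod μ := by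
    have scaled_memLp : MemLp (fun z : α × β ↦ f z.1 * g z.2 / √r) 2 (ν.prod μ) := by
      simpa only [div_eq_inv_mul] using mul_memLp.const_mul (√r)⁻¹
    refine integral_integral
      (integrable_comp_of_abs_le_mul_sq measurable_compensatedExp abs_le scaled_memLp ?_)
    filter_upwards [ae_mul_nonneg] with z hz using div_nonneg hz (sqrt_nonneg r)
  have limit_eq : 1 / 2 * ∫ z, (f z.1 * g z.2) ^ 2 ∂ν.prod μ =
      (∫ t, g t ^ 2 ∂μ) / 2 * ∫ x, f x ^ 2 ∂ν := by
    simp only [mul_pow]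
    rw [integral_prod_mul (fun x ↦ f x ^ 2) fun t ↦ g t ^ 2]
    ring
  simp only [iterated_eq, ← limit_eq]
  exact tendsto_mul_integral_comp_div_sqrt measurable_compensatedExp
    (compensatedExp_sub_sq_div_two_isLittleO.mono nhdsWithin_le_nhds) abs_le mul_memLp
    ae_mul_nonneg

/-- Analytic core of the Gaussian scaling limit of the Poisson shot-noise field
with finite second moment of amplitudes. -/
theorem stmt_0 (d : ℕ) (hd : 0 < d)
    (μ : Measure ℝ) [IsProbabilityMeasure μ] (hμsupp : μ (Set.Iio 0) = 0)
    (hm₂ : Integrable (fun t => t ^ 2) μ)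
    (ξ : (Fin d → ℝ) → ℝ) (hξmeas : Measurable ξ) (hξnn : ∀ x, 0 ≤ ξ x)
    (B : ℝ) (hξbd : ∀ x, ξ x ≤ B) (hξint : Integrable ξ) :
    Tendsto
      (fun lam : ℝ =>
        lam * ∫ x, ∫ t,
          (Real.exp (-(ξ x * t / Real.sqrt lam)) - 1 + ξ x * t / Real.sqrt lam) ∂μ)
      atTop
      (𝓝 ((∫ t, t ^ 2 ∂μ) / 2 * ∫ x, (ξ x) ^ 2)) := by
  have hξ : MemLp ξ 2 := memLp_two_of_integrable_of_norm_le hξint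
    (.of_forall fun x ↦ (norm_of_nonneg (hξnn x)).trans_le (hξbd x))
  have amplitude_nonneg : ∀ᵐ t ∂μ, 0 ≤ t := by simpa [ae_iff, Set.Iio] using hμsupp
  exact stmt_0_general hξ (.of_forall hξnn)
    ((memLp_two_iff_integrable_sq aestronglyMeasurable_id).2 hm₂) amplitude_nonneg
end

section
/- Let α ∈ (1,2) and let μ be a probability measure on [0,∞) whose tail function F̄(t) = μ((t,∞)) is strictly positive for all t ≥ 0 and regularly varying at infinity with index −α, meaning that for every c > 0, F̄(c t)/F̄(t) → c^{−α} as t → ∞. Then for every fixed a > 0, lim_{G→∞} ∫₀^∞ (1 − e^{−a u}) · ( F̄(G u) / F̄(G) ) du = a^{α−1} · Γ(2−α)/(α−1), where the integral is with respect to Lebesgue measure on (0,∞) and Γ is the Gamma function. -/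
open MeasureTheory Filter Real Topology

/-!
The quotient `F (G * u) / F G` tends to `u ^ (-α)`, so the limit is the integral of
`(1 - exp (-(a * u))) * u ^ (-α)` once dominated convergence applies. The domination comes from a
Potter bound: regular variation controls `F (2 * t) / F t` for large `t`, iterating this along
powers of two gives power bounds on `F s / F t`, and monotonicity fills in the gaps. The limiting
integral follows from Fubini's theorem and `1 - exp (-(a * u)) = ∫ b in 0..a, u * exp (-(b * u))`,
which reduces it to the Gamma integral.
-/

open Set

/-- Regular variation at infinity with index `ρ`, in the sense of Karamata. Neither measurability
nor eventual positivity of `f` is part of the definition. -/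
def IsRegularlyVarying (f : ℝ → ℝ) (ρ : ℝ) : Prop :=
  ∀ c : ℝ, 0 < c → Tendsto (fun t => f (c * t) / f t) atTop (𝓝 (c ^ ρ))

section Doubling

variable {f : ℝ → ℝ} {T : ℝ}

lemma apply_two_pow_mul_le {K : ℝ} (hT : 0 ≤ T) (hK : 0 ≤ K)
    (hdouble : ∀ t, T ≤ t → f (2 * t) ≤ K * f t) (n : ℕ) {t : ℝ} (ht : T ≤ t) :
    f (2 ^ n * t) ≤ K ^ n * f t := by
  induction n with
  | zero => simp
  | succ n ih =>
    have hTt : T ≤ 2 ^ n * t :=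
      ht.trans (le_mul_of_one_le_left (hT.trans ht) (one_le_pow₀ one_le_two))
    calc f (2 ^ (n + 1) * t) = f (2 * (2 ^ n * t)) := by ring_nf
      _ ≤ K * f (2 ^ n * t) := hdouble _ hTt
      _ ≤ K * (K ^ n * f t) := by gcongr
      _ = K ^ (n + 1) * f t := by ring

lemma apply_le_div_rpow_mul {C r : ℝ} (hT : 0 < T) (hnonneg : ∀ t, T ≤ t → 0 ≤ f t)
    (hdouble : ∀ t, T ≤ t → f (2 * t) ≤ 2 ^ r * f t)
    (hlocal : ∀ t, T ≤ t → ∀ s ∈ Icc t (2 * t), f s ≤ C * f t)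
    {t s : ℝ} (ht : T ≤ t) (hts : t ≤ s) :
    f s ≤ 2 ^ |r| * C * (s / t) ^ r * f t := by
  have ht₀ : 0 < t := hT.trans_le ht
  have hs₀ : 0 < s := ht₀.trans_le hts
  obtain ⟨n, hn_le, hn_lt⟩ := exists_nat_pow_near ((one_le_div ht₀).2 hts) one_lt_two
  obtain ⟨x, rfl⟩ : ∃ x, s = 2 ^ n * x := ⟨s / 2 ^ n, by field_simp⟩
  rw [mul_div_assoc] at hn_le hn_lt
  have hone : 1 ≤ x / t := (le_mul_iff_one_le_right (by positivity)).1 hn_le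
  have htwo : x / t ≤ 2 := by
    rw [pow_succ] at hn_lt
    exact (lt_of_mul_lt_mul_left hn_lt (by positivity)).le
  have htx : t ≤ x := (one_le_div ht₀).1 hone
  have hfx : f x ≤ C * f t := hlocal t ht x ⟨htx, (div_le_iff₀ ht₀).1 htwo⟩
  have hCf : 0 ≤ C * f t := (hnonneg x (ht.trans htx)).trans hfx
  have hratio : (x / t) ^ (-r) ≤ 2 ^ |r| :=
    (rpow_le_rpow_of_exponent_le hone (neg_le_abs r)).trans
      (rpow_le_rpow (by positivity) htwo (abs_nonneg r))
  calc f (2 ^ n * x)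
      ≤ (2 ^ r) ^ n * f x := apply_two_pow_mul_le hT.le (by positivity) hdouble n (ht.trans htx)
    _ ≤ (2 ^ r) ^ n * (C * f t) := by gcongr
    _ = (x / t) ^ (-r) * (2 ^ n * x / t) ^ r * (C * f t) := by
      rw [mul_div_assoc, mul_rpow (by positivity) (by positivity), rpow_neg (by positivity),
        rpow_pow_comm zero_le_two]
      have hpow_ne : (x / t) ^ r ≠ 0 := by positivity
      field_simp
    _ ≤ 2 ^ |r| * (2 ^ n * x / t) ^ r * (C * f t) := by gcongr
    _ = 2 ^ |r| * C * (2 ^ n * x / t) ^ r * f t := by ring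

end Doubling

namespace IsRegularlyVarying

variable {f : ℝ → ℝ} {ρ : ℝ}

lemma inv (hf : IsRegularlyVarying f ρ) : IsRegularlyVarying f⁻¹ (-ρ) := by
  intro c hc
  rw [rpow_neg hc.le]
  refine ((hf c hc).inv₀ (rpow_pos_of_pos hc ρ).ne').congr fun t => ?_
  rw [Pi.inv_apply, Pi.inv_apply, inv_div_inv, inv_div]

lemma eventually_apply_two_mul_le {r : ℝ} (hf : IsRegularlyVarying f ρ)
    (hpos : ∀ᶠ t in atTop, 0 < f t) (hr : ρ < r) :
    ∀ᶠ t in atTop, f (2 * t) ≤ 2 ^ r * f t := by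
  have hlt : ∀ᶠ t in atTop, f (2 * t) / f t < 2 ^ r :=
    (hf 2 two_pos).eventually_lt_const (rpow_lt_rpow_of_exponent_lt one_lt_two hr)
  filter_upwards [hpos, hlt] with t ht hlt
  exact ((div_lt_iff₀ ht).1 hlt).le

lemma eventually_apply_le_div_rpow_mul {C r : ℝ} (hf : IsRegularlyVarying f ρ)
    (hpos : ∀ᶠ t in atTop, 0 < f t) (hr : ρ < r)
    (hlocal : ∀ᶠ t in atTop, ∀ s ∈ Icc t (2 * t), f s ≤ C * f t) :
    ∀ᶠ t in atTop, ∀ s, t ≤ s → f s ≤ 2 ^ |r| * C * (s / t) ^ r * f t := by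
  obtain ⟨T, hT⟩ := ((((eventually_gt_atTop 0).and hpos).and
    (hf.eventually_apply_two_mul_le hpos hr)).and hlocal).exists_forall_of_atTop
  filter_upwards [eventually_ge_atTop T] with t ht s hts
  exact apply_le_div_rpow_mul (hT T le_rfl).1.1.1 (fun x hx => (hT x hx).1.1.2.le)
    (fun x hx => (hT x hx).1.2) (fun x hx => (hT x hx).2) ht hts

section Antitone

variable {F : ℝ → ℝ} {p q : ℝ}

lemma index_nonpos (hRV : IsRegularlyVarying F ρ) (hF : AntitoneOn F (Ici 0))
    (hpos : ∀ t, 0 ≤ t → 0 < F t) : ρ ≤ 0 := by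
  have hle : (2 : ℝ) ^ ρ ≤ 1 := by
    refine le_of_tendsto (hRV 2 two_pos) ?_
    filter_upwards [eventually_ge_atTop 0] with t ht
    exact (div_le_one (hpos t ht)).2
      (hF (mem_Ici.2 ht) (mem_Ici.2 (by positivity)) (by linarith))
  exact not_lt.1 fun hρ => (one_lt_rpow one_lt_two hρ).not_ge hle

lemma exists_div_le_rpow_of_one_le (hRV : IsRegularlyVarying F ρ) (hF : AntitoneOn F (Ici 0))
    (hpos : ∀ t, 0 ≤ t → 0 < F t) (hq : ρ < q) :
    ∃ C, ∀ᶠ G in atTop, ∀ u, 1 ≤ u → F (G * u) / F G ≤ C * u ^ q := by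
  have hlocal : ∀ᶠ t in atTop, ∀ s ∈ Icc t (2 * t), F s ≤ 1 * F t := by
    filter_upwards [eventually_ge_atTop 0] with t ht s hs
    simpa only [one_mul] using hF (mem_Ici.2 ht) (mem_Ici.2 (ht.trans hs.1)) hs.1
  refine ⟨2 ^ |q| * 1, ?_⟩
  filter_upwards [eventually_gt_atTop 0, hRV.eventually_apply_le_div_rpow_mul
    ((eventually_ge_atTop 0).mono hpos) hq hlocal] with G hG hbound u hu
  rw [div_le_iff₀ (hpos G hG.le)]
  simpa only [mul_div_cancel_left₀ u hG.ne'] using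
    hbound (G * u) (le_mul_of_one_le_right hG.le hu)

lemma exists_apply_le_div_rpow_mul (hRV : IsRegularlyVarying F ρ) (hF : AntitoneOn F (Ici 0))
    (hpos : ∀ t, 0 ≤ t → 0 < F t) (hp : p < ρ) :
    ∃ C, ∀ᶠ t in atTop, ∀ s, t ≤ s → F t ≤ C * (s / t) ^ (-p) * F s := by
  have hpos_inv : ∀ᶠ t in atTop, 0 < F⁻¹ t :=
    (eventually_ge_atTop 0).mono fun t ht => inv_pos.2 (hpos t ht)
  have hlocal : ∀ᶠ t in atTop, ∀ s ∈ Icc t (2 * t), F⁻¹ s ≤ 2 ^ (-p) * F⁻¹ t := by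
    filter_upwards [eventually_ge_atTop 0,
      hRV.inv.eventually_apply_two_mul_le hpos_inv (neg_lt_neg hp)] with t ht hdouble s hs
    have hs₀ : 0 ≤ s := ht.trans hs.1
    refine le_trans ?_ hdouble
    exact inv_anti₀ (hpos _ (by positivity))
      (hF (mem_Ici.2 hs₀) (mem_Ici.2 (hs₀.trans hs.2)) hs.2)
  refine ⟨2 ^ |-p| * 2 ^ (-p), ?_⟩
  filter_upwards [eventually_ge_atTop 0,
    hRV.inv.eventually_apply_le_div_rpow_mul hpos_inv (neg_lt_neg hp) hlocal] with t ht hbound s hts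
  have h := hbound s hts
  rw [Pi.inv_apply, Pi.inv_apply, ← div_eq_mul_inv, le_div_iff₀ (hpos t ht)] at h
  exact (inv_mul_le_iff₀' (hpos s (ht.trans hts))).1 h

lemma exists_div_le_rpow_of_le_one (hRV : IsRegularlyVarying F ρ) (hF : AntitoneOn F (Ici 0))
    (hpos : ∀ t, 0 ≤ t → 0 < F t) (hp : p < ρ) :
    ∃ C, ∀ᶠ G in atTop, ∀ u, 0 < u → u ≤ 1 → F (G * u) / F G ≤ C * u ^ p := by
  obtain ⟨C, hC⟩ := hRV.exists_apply_le_div_rpow_mul hF hpos hp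
  obtain ⟨T, hT⟩ := ((eventually_gt_atTop 0).and hC).exists_forall_of_atTop
  have hT₀ : 0 < T := (hT T le_rfl).1
  have hFT : 0 < F T := hpos T hT₀.le
  have hF_le_zero : ∀ t, 0 ≤ t → F t ≤ F 0 := fun t ht => hF self_mem_Ici (mem_Ici.2 ht) ht
  have hC₀ : 0 ≤ C := by
    have h := (hT T le_rfl).2 T le_rfl
    rw [div_self hT₀.ne', one_rpow, mul_one] at h
    exact (pos_of_mul_pos_left (hFT.trans_le h) hFT.le).le
  refine ⟨F 0 / F T * C, ?_⟩
  filter_upwards [eventually_ge_atTop T] with G hG u hu hu₁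
  have hG₀ : 0 < G := hT₀.trans_le hG
  have hFG : 0 < F G := hpos G hG₀.le
  -- Replacing `G * u` by `m` costs only the factor `F 0 / F T` and enters the range of `hT`.
  set m := max (G * u) T
  have hm₀ : 0 < m := lt_max_of_lt_right hT₀
  have hF_le_m : F (G * u) ≤ F 0 / F T * F m := by
    rcases max_choice (G * u) T with hm | hm
    · rw [show m = G * u from hm]
      exact le_mul_of_one_le_left (hpos _ (by positivity)).le
        ((one_le_div hFT).2 (hF_le_zero T hT₀.le))
    · rw [show m = T from hm, div_mul_cancel₀ _ hFT.ne']
      exact hF_le_zero _ (by positivity)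
  have hratio : (G / m) ^ (-p) ≤ u ^ p := by
    rw [← inv_inv (u ^ p), ← rpow_neg hu.le, ← inv_rpow hu.le]
    refine rpow_le_rpow (by positivity) ?_ (by linarith [hRV.index_nonpos hF hpos])
    rw [div_le_iff₀ hm₀, ← div_eq_inv_mul, le_div_iff₀ hu]
    exact le_max_left _ _
  have hFm : F m ≤ C * (G / m) ^ (-p) * F G :=
    (hT m (le_max_right _ _)).2 G (max_le (mul_le_of_le_one_right hG₀.le hu₁) hG)
  have hfactor : 0 ≤ F 0 / F T := (div_pos (hpos 0 le_rfl) hFT).le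
  rw [div_le_iff₀ hFG]
  calc F (G * u) ≤ F 0 / F T * F m := hF_le_m
    _ ≤ F 0 / F T * (C * (G / m) ^ (-p) * F G) := by gcongr
    _ ≤ F 0 / F T * (C * u ^ p * F G) := by gcongr
    _ = F 0 / F T * C * u ^ p * F G := by ring

theorem exists_div_le_rpow_add_rpow (hRV : IsRegularlyVarying F ρ) (hF : AntitoneOn F (Ici 0))
    (hpos : ∀ t, 0 ≤ t → 0 < F t) (hp : p < ρ) (hq : ρ < q) :
    ∃ C, ∀ᶠ G in atTop, ∀ u, 0 < u → F (G * u) / F G ≤ C * (u ^ p + u ^ q) := by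
  obtain ⟨A, hA⟩ := hRV.exists_div_le_rpow_of_le_one hF hpos hp
  obtain ⟨B, hB⟩ := hRV.exists_div_le_rpow_of_one_le hF hpos hq
  refine ⟨|A| + |B|, ?_⟩
  filter_upwards [hA, hB] with G hA hB u hu
  have hup : 0 < u ^ p := rpow_pos_of_pos hu p
  have huq : 0 < u ^ q := rpow_pos_of_pos hu q
  rcases le_total u 1 with hu₁ | hu₁
  · calc F (G * u) / F G ≤ A * u ^ p := hA u hu hu₁
      _ ≤ (|A| + |B|) * (u ^ p + u ^ q) := by
        gcongr <;> linarith [le_abs_self A, abs_nonneg B]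
  · calc F (G * u) / F G ≤ B * u ^ q := hB u hu₁
      _ ≤ (|A| + |B|) * (u ^ p + u ^ q) := by
        gcongr <;> linarith [le_abs_self B, abs_nonneg A]

theorem tendsto_integral_mul_div {k : ℝ → ℝ} (hRV : IsRegularlyVarying F ρ)
    (hF : AntitoneOn F (Ici 0)) (hpos : ∀ t, 0 ≤ t → 0 < F t) (hp : p < ρ) (hq : ρ < q)
    (hkp : IntegrableOn (fun u => k u * u ^ p) (Ioi 0))
    (hkq : IntegrableOn (fun u => k u * u ^ q) (Ioi 0)) :
    Tendsto (fun G => ∫ u in Ioi 0, k u * (F (G * u) / F G)) atTop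
      (𝓝 (∫ u in Ioi 0, k u * u ^ ρ)) := by
  obtain ⟨C, hC⟩ := hRV.exists_div_le_rpow_add_rpow hF hpos hp hq
  have hk : AEStronglyMeasurable k (volume.restrict (Ioi 0)) := by
    have hrpow : Measurable fun u : ℝ => u ^ (-p) := by fun_prop
    refine (hkp.aestronglyMeasurable.mul hrpow.aestronglyMeasurable).congr ?_
    filter_upwards [ae_restrict_mem measurableSet_Ioi] with u hu
    rw [Pi.mul_apply, mul_assoc, ← rpow_add hu, add_neg_cancel, rpow_zero, mul_one]
  refine tendsto_integral_filter_of_dominated_convergence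
    (fun u => C * (‖k u * u ^ p‖ + ‖k u * u ^ q‖)) ?_ ?_
    ((hkp.norm.add hkq.norm).const_mul C) ?_
  · filter_upwards [eventually_ge_atTop 0] with G hG
    have hanti : AntitoneOn (fun u => F (G * u)) (Ioi 0) := fun x hx y hy hxy =>
      hF (mem_Ici.2 (mul_nonneg hG (le_of_lt hx))) (mem_Ici.2 (mul_nonneg hG (le_of_lt hy)))
        (mul_le_mul_of_nonneg_left hxy hG)
    exact hk.mul ((aemeasurable_restrict_of_antitoneOn measurableSet_Ioi
      hanti).div_const _).aestronglyMeasurable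
  · filter_upwards [hC, eventually_ge_atTop 0] with G hbound hG
    filter_upwards [ae_restrict_mem measurableSet_Ioi] with u (hu : 0 < u)
    have hnonneg : 0 ≤ F (G * u) / F G := (div_pos (hpos _ (by positivity)) (hpos G hG)).le
    calc ‖k u * (F (G * u) / F G)‖ = ‖k u‖ * (F (G * u) / F G) := by
          rw [norm_mul, norm_of_nonneg hnonneg]
      _ ≤ ‖k u‖ * (C * (u ^ p + u ^ q)) := by gcongr; exact hbound u hu
      _ = C * (‖k u * u ^ p‖ + ‖k u * u ^ q‖) := by
          rw [norm_mul, norm_mul, norm_of_nonneg (rpow_nonneg hu.le p),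
            norm_of_nonneg (rpow_nonneg hu.le q)]
          ring
  · filter_upwards [ae_restrict_mem measurableSet_Ioi] with u hu
    simpa only [mul_comm u] using (hRV u hu).const_mul (k u)

end Antitone

end IsRegularlyVarying

section LaplaceKernel

variable {α a : ℝ}

lemma integral_rpow_one_sub_mul_exp_neg_mul (hα₂ : α < 2) {b : ℝ} (hb : 0 < b) :
    ∫ u in Ioi (0 : ℝ), u ^ (1 - α) * exp (-(b * u)) = b ^ (α - 2) * Gamma (2 - α) := by
  have h := integral_rpow_mul_exp_neg_mul_Ioi (sub_pos.2 hα₂) hb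
  rwa [one_div, inv_rpow hb.le, ← rpow_neg hb.le, neg_sub,
    show 2 - α - 1 = 1 - α by ring] at h

lemma integrableOn_rpow_sub_two (hα₁ : 1 < α) : IntegrableOn (fun b => b ^ (α - 2)) (Ioc 0 a) :=
  (intervalIntegral.intervalIntegrable_rpow' (by linarith)).1

lemma integrable_prod_rpow_one_sub_mul_exp_neg_mul (hα₁ : 1 < α) (hα₂ : α < 2) :
    Integrable (fun z : ℝ × ℝ => z.1 ^ (1 - α) * exp (-(z.2 * z.1)))
      ((volume.restrict (Ioi 0)).prod (volume.restrict (Ioc 0 a))) := by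
  have hmeas : Measurable fun z : ℝ × ℝ => z.1 ^ (1 - α) * exp (-(z.2 * z.1)) := by fun_prop
  refine (integrable_prod_iff' hmeas.aestronglyMeasurable).2 ⟨?_, ?_⟩
  · filter_upwards [ae_restrict_mem measurableSet_Ioc] with b hb
    simpa only [rpow_one, neg_mul] using
      (integrableOn_rpow_mul_exp_neg_mul_rpow (s := 1 - α) (by linarith) one_pos hb.1).integrable
  · refine ((integrableOn_rpow_sub_two hα₁).mul_const (Gamma (2 - α))).congr ?_
    filter_upwards [ae_restrict_mem measurableSet_Ioc] with b hb
    rw [← integral_rpow_one_sub_mul_exp_neg_mul hα₂ hb.1]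
    refine setIntegral_congr_fun measurableSet_Ioi fun u (hu : 0 < u) => ?_
    exact (norm_of_nonneg (by positivity)).symm

lemma integral_Ioc_mul_exp_neg_mul (ha : 0 ≤ a) (u : ℝ) :
    ∫ b in Ioc 0 a, u * exp (-(b * u)) = 1 - exp (-(a * u)) := by
  have hderiv : ∀ b ∈ uIcc 0 a,
      HasDerivAt (fun b => -exp (-(b * u))) (u * exp (-(b * u))) b := fun b _ => by
    refine (((hasDerivAt_id b).mul_const u).fun_neg.exp.fun_neg).congr_deriv ?_
    simp only [id]
    ring
  rw [← intervalIntegral.integral_of_le ha, intervalIntegral.integral_eq_sub_of_hasDerivAt hderiv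
    ((by fun_prop : Continuous fun b => u * exp (-(b * u))).intervalIntegrable _ _),
    zero_mul, neg_zero, exp_zero]
  ring

lemma integral_Ioc_rpow_one_sub_mul_exp_neg_mul (ha : 0 ≤ a) {u : ℝ} (hu : 0 < u) :
    ∫ b in Ioc 0 a, u ^ (1 - α) * exp (-(b * u)) = (1 - exp (-(a * u))) * u ^ (-α) := by
  rw [← integral_Ioc_mul_exp_neg_mul ha, mul_comm, ← integral_const_mul, sub_eq_add_neg,
    rpow_add hu, rpow_one]
  congr with b
  ring

lemma integrableOn_one_sub_exp_neg_mul_mul_rpow (hα₁ : 1 < α) (hα₂ : α < 2) (ha : 0 ≤ a) :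
    IntegrableOn (fun u => (1 - exp (-(a * u))) * u ^ (-α)) (Ioi 0) :=
  (integrable_prod_rpow_one_sub_mul_exp_neg_mul hα₁ hα₂).integral_prod_left.congr <|
    (ae_restrict_mem measurableSet_Ioi).mono fun _ hu =>
      integral_Ioc_rpow_one_sub_mul_exp_neg_mul ha hu

theorem integral_one_sub_exp_neg_mul_mul_rpow (hα₁ : 1 < α) (hα₂ : α < 2) (ha : 0 ≤ a) :
    ∫ u in Ioi (0 : ℝ), (1 - exp (-(a * u))) * u ^ (-α) =
      a ^ (α - 1) * (Gamma (2 - α) / (α - 1)) :=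
  calc ∫ u in Ioi (0 : ℝ), (1 - exp (-(a * u))) * u ^ (-α)
      = ∫ u in Ioi (0 : ℝ), ∫ b in Ioc 0 a, u ^ (1 - α) * exp (-(b * u)) :=
        setIntegral_congr_fun measurableSet_Ioi fun _ hu =>
          (integral_Ioc_rpow_one_sub_mul_exp_neg_mul ha hu).symm
    _ = ∫ b in Ioc 0 a, ∫ u in Ioi (0 : ℝ), u ^ (1 - α) * exp (-(b * u)) :=
        integral_integral_swap (integrable_prod_rpow_one_sub_mul_exp_neg_mul hα₁ hα₂)
    _ = ∫ b in Ioc 0 a, b ^ (α - 2) * Gamma (2 - α) :=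
        setIntegral_congr_fun measurableSet_Ioc fun _ hb =>
          integral_rpow_one_sub_mul_exp_neg_mul hα₂ hb.1
    _ = a ^ (α - 1) * (Gamma (2 - α) / (α - 1)) := by
        rw [integral_mul_const, ← intervalIntegral.integral_of_le ha,
          integral_rpow (Or.inl (by linarith)), show α - 2 + 1 = α - 1 by ring,
          zero_rpow (by linarith)]
        ring

end LaplaceKernel

lemma antitone_toReal_measure_Ioi (μ : Measure ℝ) [IsFiniteMeasure μ] :
    Antitone fun t => (μ (Ioi t)).toReal :=
  fun _ _ hxy => measureReal_mono (Ioi_subset_Ioi hxy)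

theorem stmt_4_general {α a : ℝ} {F : ℝ → ℝ} (hα₁ : 1 < α) (hα₂ : α < 2)
    (hF : AntitoneOn F (Ici 0)) (hpos : ∀ t, 0 ≤ t → 0 < F t)
    (hRV : IsRegularlyVarying F (-α)) (ha : 0 ≤ a) :
    Tendsto (fun G => ∫ u in Ioi 0, (1 - exp (-(a * u))) * (F (G * u) / F G)) atTop
      (𝓝 (a ^ (α - 1) * (Gamma (2 - α) / (α - 1)))) := by
  obtain ⟨β, hβ₁, hβα⟩ := exists_between hα₁
  obtain ⟨γ, hαγ, hγ₂⟩ := exists_between hα₂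
  rw [← integral_one_sub_exp_neg_mul_mul_rpow hα₁ hα₂ ha]
  exact hRV.tendsto_integral_mul_div hF hpos (neg_lt_neg hαγ) (neg_lt_neg hβα)
    (integrableOn_one_sub_exp_neg_mul_mul_rpow (hα₁.trans hαγ) hγ₂ ha)
    (integrableOn_one_sub_exp_neg_mul_mul_rpow hβ₁ (hβα.trans hα₂) ha)

/-- Key limit in the α-stable scaling limit for Poisson shot-noise: for a probability
measure on [0,∞) with everywhere positive, regularly varying (index -α) tail F̄,
∫₀^∞ (1 - e^{-a u}) F̄(G u)/F̄(G) du → a^{α-1} Γ(2-α)/(α-1) as G → ∞. -/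
theorem stmt_4 (α : ℝ) (hα₁ : 1 < α) (hα₂ : α < 2)
    (μ : Measure ℝ) [IsProbabilityMeasure μ]
    (F : ℝ → ℝ) (hF : ∀ t, F t = (μ (Set.Ioi t)).toReal)
    (hFpos : ∀ t : ℝ, 0 ≤ t → 0 < F t)
    (hRV : ∀ c : ℝ, 0 < c →
      Tendsto (fun t => F (c * t) / F t) atTop (𝓝 (c ^ (-α))))
    (a : ℝ) (ha : 0 < a) :
    Tendsto
      (fun G : ℝ =>
        ∫ u in Set.Ioi (0 : ℝ), (1 - Real.exp (-(a * u))) * (F (G * u) / F G))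
      atTop
      (𝓝 (a ^ (α - 1) * (Real.Gamma (2 - α) / (α - 1)))) := by
  obtain rfl : F = fun t => (μ (Ioi t)).toReal := funext hF
  exact stmt_4_general hα₁ hα₂ ((antitone_toReal_measure_Ioi μ).antitoneOn _) hFpos hRV ha.le
end

section
/- Let d be a positive natural number and α ∈ (1,2). Let μ be a probability measure on [0,∞) whose tail function F̄(t) = μ((t,∞)) is strictly positive for all t ≥ 0 and regularly varying at infinity with index −α, i.e., for every c > 0, F̄(c t)/F̄(t) → c^{−α} as t → ∞. Let g : (0,∞) → (0,∞) be such that g(λ) → ∞ and λ F̄(g(λ)) → 1 as λ → ∞. Let ξ : ℝ^d → [0,∞) be measurable, bounded and Lebesgue-integrable. Then, with ψ(u) = e^{−u} − 1 + u, lim_{λ→∞} λ ∫_{ℝ^d} ∫₀^∞ ψ( ξ(x) t / g(λ) ) dμ(t) dx = ( Γ(2−α)/(α−1) ) ∫_{ℝ^d} ξ(x)^α dx, where the integral over ℝ^d is with respect to Lebesgue measure and ξ(x)^α is interpreted as 0 when ξ(x) = 0. (This is the analytic core of the α-stable scaling limit of the Poisson shot-noise field with regularly varying amplitude distribution.) 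-/
open MeasureTheory Filter Real Topology

/-!
Integrating by parts, the mean `∫ ψ (t / r) dμ(t)` equals `J r = ∫₀^∞ (1 - e⁻ˢ) F̄ (s r) ds`, so
the limit of `λ ∫ J (g λ / ξ x) dx` is wanted. One principle is used twice: if `Φ` is nonincreasing
and regularly varying with index `-α`, then `∫ w Φ (s r) / Φ r → ∫ w s ^ (-α)` as `r → ∞`, by
dominated convergence, because Potter's bound gives `Φ (s r) / Φ r ≤ C (s ^ (-p) + s ^ (-q))` for
all `s > 0` whenever `q < α < p`. For `Φ = F̄` and `w s = 1 - e⁻ˢ` it yields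
`J r / F̄ r → Γ (2 - α) / (α - 1)`, so that `J` is again regularly varying with index `-α`;
for `Φ = J`, `w = 1` and `s = 1 / ξ` it yields the theorem.
-/

/-- Regular variation of `Φ` at infinity with index `ρ`; it is what tail functions and their
transforms are assumed or shown to satisfy. Positivity of `Φ` is kept out of the definition, and is
a separate hypothesis where it matters. -/
def RegularlyVarying (Φ : ℝ → ℝ) (ρ : ℝ) : Prop :=
  ∀ c, 0 < c → Tendsto (fun r ↦ Φ (c * r) / Φ r) atTop (𝓝 (c ^ ρ))

namespace RegularlyVarying

open Set

variable {Φ Ψ : ℝ → ℝ} {ρ K α p q : ℝ}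

lemma of_tendsto_div (hΦ : RegularlyVarying Φ ρ) (hne : ∀ᶠ r in atTop, Φ r ≠ 0) (hK : K ≠ 0)
    (hΨ : Tendsto (fun r ↦ Ψ r / Φ r) atTop (𝓝 K)) : RegularlyVarying Ψ ρ := by
  intro c hc
  have hscale : Tendsto (fun r ↦ c * r) atTop atTop := tendsto_id.const_mul_atTop hc
  have hlim : Tendsto (fun r ↦ Ψ (c * r) / Φ (c * r) * (Φ (c * r) / Φ r) / (Ψ r / Φ r)) atTop
      (𝓝 (K * c ^ ρ / K)) :=
    ((hΨ.comp hscale).mul (hΦ c hc)).div hΨ hK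
  rw [mul_div_cancel_left₀ _ hK] at hlim
  refine hlim.congr' ?_
  filter_upwards [hne, hscale.eventually hne] with r hr hcr
  rw [div_mul_div_cancel₀ hcr, div_div_div_cancel_right₀ hr]

lemma tendsto_rpow_mul_two_mul_div (hΦ : RegularlyVarying Φ (-α)) (q : ℝ) :
    Tendsto (fun r ↦ (2 * r) ^ q * Φ (2 * r) / (r ^ q * Φ r)) atTop (𝓝 (2 ^ (q - α))) := by
  rw [sub_eq_add_neg, rpow_add two_pos]
  refine ((hΦ 2 two_pos).const_mul (2 ^ q)).congr' ?_
  filter_upwards [eventually_gt_atTop 0] with r hr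
  have := (rpow_pos_of_pos hr q).ne'
  rw [mul_rpow zero_le_two hr.le]
  field_simp

lemma eventually_rpow_mul_le (hΦ : RegularlyVarying Φ (-α)) (hanti : AntitoneOn Φ (Ioi 0))
    (hpos : ∀ r, 0 < r → 0 < Φ r) (hq₀ : 0 ≤ q) (hq : q < α) :
    ∀ᶠ a in atTop, ∀ b, a ≤ b → b ^ q * Φ b ≤ 2 ^ q * (a ^ q * Φ a) := by
  have hdouble : ∀ᶠ r in atTop, (2 * r) ^ q * Φ (2 * r) ≤ r ^ q * Φ r := by
    filter_upwards [(hΦ.tendsto_rpow_mul_two_mul_div q).eventually_lt_const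
      (rpow_lt_one_of_one_lt_of_neg one_lt_two (sub_neg.2 hq)), eventually_gt_atTop 0] with r hr hr₀
    exact ((div_lt_one (mul_pos (rpow_pos_of_pos hr₀ q) (hpos r hr₀))).1 hr).le
  filter_upwards [eventually_forall_ge_atTop.2 hdouble, eventually_gt_atTop 0]
    with a hdouble ha b hab
  have hdecr : Antitone fun n : ℕ ↦ (2 ^ n * a) ^ q * Φ (2 ^ n * a) :=
    antitone_nat_of_succ_le fun n ↦ by
      rw [pow_succ', mul_assoc]
      exact hdouble _ (le_mul_of_one_le_left ha.le (one_le_pow₀ one_le_two))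
  obtain ⟨n, hn, hn'⟩ := exists_nat_pow_near ((one_le_div ha).2 hab) one_lt_two
  rw [le_div_iff₀ ha] at hn
  rw [div_lt_iff₀ ha] at hn'
  have hna : 0 < 2 ^ n * a := by positivity
  have hb : 0 < b := ha.trans_le hab
  calc b ^ q * Φ b ≤ (2 ^ (n + 1) * a) ^ q * Φ (2 ^ n * a) :=
        mul_le_mul (rpow_le_rpow hb.le hn'.le hq₀) (hanti hna hb hn) (hpos b hb).le (by positivity)
    _ = 2 ^ q * ((2 ^ n * a) ^ q * Φ (2 ^ n * a)) := by
        rw [pow_succ', mul_assoc, mul_rpow zero_le_two hna.le, mul_assoc]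
    _ ≤ 2 ^ q * (a ^ q * Φ a) :=
        mul_le_mul_of_nonneg_left (by simpa using hdecr n.zero_le) (by positivity)

lemma eventually_le_rpow_mul (hΦ : RegularlyVarying Φ (-α)) (hanti : AntitoneOn Φ (Ioi 0))
    (hpos : ∀ r, 0 < r → 0 < Φ r) (hp₀ : 0 ≤ p) (hp : α < p) :
    ∀ᶠ a in atTop, ∀ b, a ≤ b → a ^ p * Φ a ≤ 2 ^ p * (b ^ p * Φ b) := by
  have hdouble : ∀ᶠ r in atTop, r ^ p * Φ r ≤ (2 * r) ^ p * Φ (2 * r) := by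
    filter_upwards [(hΦ.tendsto_rpow_mul_two_mul_div p).eventually_const_lt
      (one_lt_rpow one_lt_two (sub_pos.2 hp)), eventually_gt_atTop 0] with r hr hr₀
    exact ((one_lt_div (mul_pos (rpow_pos_of_pos hr₀ p) (hpos r hr₀))).1 hr).le
  filter_upwards [eventually_forall_ge_atTop.2 hdouble, eventually_gt_atTop 0]
    with a hdouble ha b hab
  have hincr : Monotone fun n : ℕ ↦ (2 ^ n * a) ^ p * Φ (2 ^ n * a) :=
    monotone_nat_of_le_succ fun n ↦ by
      rw [pow_succ', mul_assoc]
      exact hdouble _ (le_mul_of_one_le_left ha.le (one_le_pow₀ one_le_two))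
  obtain ⟨n, hn, hn'⟩ := exists_nat_pow_near ((one_le_div ha).2 hab) one_lt_two
  rw [le_div_iff₀ ha] at hn
  rw [div_lt_iff₀ ha] at hn'
  have hna : 0 < 2 ^ (n + 1) * a := by positivity
  have hb : 0 < b := ha.trans_le hab
  calc a ^ p * Φ a ≤ (2 ^ (n + 1) * a) ^ p * Φ (2 ^ (n + 1) * a) := by
        simpa using hincr (n + 1).zero_le
    _ ≤ (2 * b) ^ p * Φ b := by
        refine mul_le_mul (rpow_le_rpow hna.le ?_ hp₀) (hanti hb hna hn'.le) (hpos _ hna).le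
          (by positivity)
        rw [pow_succ', mul_assoc]
        gcongr
    _ = 2 ^ p * (b ^ p * Φ b) := by rw [mul_rpow zero_le_two hb.le, mul_assoc]

lemma exists_eventually_rpow_mul_le (hΦ : RegularlyVarying Φ (-α)) (hanti : AntitoneOn Φ (Ioi 0))
    (hpos : ∀ r, 0 < r → 0 < Φ r) (hbdd : ∀ b, ∃ M, ∀ a, 0 < a → a ≤ b → a ^ p * Φ a ≤ M)
    (hp₀ : 0 ≤ p) (hp : α < p) :
    ∃ C, ∀ᶠ b in atTop, ∀ a, 0 < a → a ≤ b → a ^ p * Φ a ≤ C * (b ^ p * Φ b) := by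
  obtain ⟨T, hT, hT₀⟩ := ((eventually_forall_ge_atTop.2
    (hΦ.eventually_le_rpow_mul hanti hpos hp₀ hp)).and (eventually_gt_atTop 0)).exists
  have hpos' (r : ℝ) (hr : 0 < r) : 0 < r ^ p * Φ r := mul_pos (rpow_pos_of_pos hr p) (hpos r hr)
  obtain ⟨M, hM⟩ := hbdd T
  set m := T ^ p * Φ T
  have hm : 0 < m := hpos' T hT₀
  have hmM : 1 ≤ M / m := (one_le_div hm).2 (hM T hT₀ le_rfl)
  refine ⟨M / m * 2 ^ p, ?_⟩
  filter_upwards [eventually_ge_atTop T] with b hb a ha hab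
  rw [mul_assoc]
  obtain haT | hTa := le_total a T
  · calc a ^ p * Φ a ≤ M := hM a ha haT
      _ = M / m * m := (div_mul_cancel₀ M hm.ne').symm
      _ ≤ M / m * (2 ^ p * (b ^ p * Φ b)) := by gcongr; exact hT T le_rfl b hb
  · calc a ^ p * Φ a ≤ 2 ^ p * (b ^ p * Φ b) := hT a hTa b hab
      _ ≤ M / m * (2 ^ p * (b ^ p * Φ b)) :=
        le_mul_of_one_le_left (mul_pos (by positivity) (hpos' b (ha.trans_le hab))).le hmM

theorem exists_potter_bound (hΦ : RegularlyVarying Φ (-α)) (hanti : AntitoneOn Φ (Ioi 0))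
    (hpos : ∀ r, 0 < r → 0 < Φ r) (hbdd : ∀ b, ∃ M, ∀ a, 0 < a → a ≤ b → a ^ p * Φ a ≤ M)
    (hq₀ : 0 ≤ q) (hq : q < α) (hp : α < p) :
    ∃ C, ∀ᶠ r in atTop, ∀ s, 0 < s → Φ (s * r) / Φ r ≤ C * (s ^ (-p) + s ^ (-q)) := by
  obtain ⟨C, hC⟩ := hΦ.exists_eventually_rpow_mul_le hanti hpos hbdd (by linarith) hp
  refine ⟨max C (2 ^ q), ?_⟩
  have div_le {κ D r s : ℝ} (hr : 0 < r) (hs : 0 < s)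
      (h : (s * r) ^ κ * Φ (s * r) ≤ D * (r ^ κ * Φ r)) : Φ (s * r) / Φ r ≤ D * s ^ (-κ) := by
    rw [mul_rpow hs.le hr.le] at h
    rw [rpow_neg hs.le, ← div_eq_mul_inv, div_le_div_iff₀ (hpos r hr) (rpow_pos_of_pos hs κ)]
    refine le_of_mul_le_mul_left ?_ (rpow_pos_of_pos hr κ)
    linarith
  filter_upwards [hC, hΦ.eventually_rpow_mul_le hanti hpos hq₀ hq, eventually_gt_atTop 0]
    with r hsmall hlarge hr s hs
  have hsp : 0 < s ^ (-p) := rpow_pos_of_pos hs _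
  have hsq : 0 < s ^ (-q) := rpow_pos_of_pos hs _
  have : 0 < max C (2 ^ q) := lt_max_of_lt_right (by positivity)
  obtain hs₁ | hs₁ := le_total s 1
  · calc Φ (s * r) / Φ r ≤ C * s ^ (-p) :=
          div_le hr hs (hsmall _ (mul_pos hs hr) (mul_le_of_le_one_left hr.le hs₁))
      _ ≤ max C (2 ^ q) * (s ^ (-p) + s ^ (-q)) := by
          gcongr
          exacts [le_max_left _ _, le_add_of_nonneg_right hsq.le]
  · calc Φ (s * r) / Φ r ≤ 2 ^ q * s ^ (-q) :=
          div_le hr hs (hlarge _ (le_mul_of_one_le_left hr.le hs₁))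
      _ ≤ max C (2 ^ q) * (s ^ (-p) + s ^ (-q)) := by
          gcongr
          exacts [le_max_right _ _, le_add_of_nonneg_left hsp.le]

theorem tendsto_integral_mul_div {X : Type*} [MeasurableSpace X] {ν : Measure X} {w s : X → ℝ}
    (hΦ : RegularlyVarying Φ (-α)) (hanti : AntitoneOn Φ (Ioi 0)) (hpos : ∀ r, 0 < r → 0 < Φ r)
    (hbdd : ∀ b, ∃ M, ∀ a, 0 < a → a ≤ b → a ^ p * Φ a ≤ M) (hmeas : Measurable Φ)
    (hq₀ : 0 ≤ q) (hq : q < α) (hp : α < p)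
    (hw : AEStronglyMeasurable w ν) (hs : AEMeasurable s ν) (hs₀ : ∀ᵐ x ∂ν, 0 < s x)
    (hwp : Integrable (fun x ↦ w x * s x ^ (-p)) ν)
    (hwq : Integrable (fun x ↦ w x * s x ^ (-q)) ν) :
    Tendsto (fun r ↦ ∫ x, w x * (Φ (s x * r) / Φ r) ∂ν) atTop
      (𝓝 (∫ x, w x * s x ^ (-α) ∂ν)) := by
  obtain ⟨C, hC⟩ := hΦ.exists_potter_bound hanti hpos hbdd hq₀ hq hp
  refine tendsto_integral_filter_of_dominated_convergence
    (fun x ↦ C * (‖w x * s x ^ (-p)‖ + ‖w x * s x ^ (-q)‖)) ?_ ?_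
    ((hwp.norm.add hwq.norm).const_mul C) ?_
  · exact .of_forall fun r ↦ hw.mul
      ((hmeas.comp_aemeasurable (hs.mul_const r)).div_const _).aestronglyMeasurable
  · filter_upwards [hC, eventually_gt_atTop 0] with r hr hr₀
    filter_upwards [hs₀] with x hx
    have hratio : 0 < Φ (s x * r) / Φ r := div_pos (hpos _ (mul_pos hx hr₀)) (hpos r hr₀)
    simp only [norm_mul, norm_of_nonneg hratio.le, norm_of_nonneg (rpow_nonneg hx.le _)]
    calc ‖w x‖ * (Φ (s x * r) / Φ r) ≤ ‖w x‖ * (C * (s x ^ (-p) + s x ^ (-q))) := by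
          gcongr
          exact hr _ hx
      _ = C * (‖w x‖ * s x ^ (-p) + ‖w x‖ * s x ^ (-q)) := by ring
  · filter_upwards [hs₀] with x hx using (hΦ _ hx).const_mul _

lemma integrableOn_Ioi (hΦ : RegularlyVarying Φ (-α)) (hanti : Antitone Φ)
    (hpos : ∀ r, 0 < r → 0 < Φ r) (hα : 1 < α) : IntegrableOn Φ (Ioi 0) := by
  obtain ⟨q, hq₁, hq⟩ := exists_between hα
  obtain ⟨T, hT, hT₀⟩ := ((hΦ.eventually_rpow_mul_le (hanti.antitoneOn _) hpos
    (zero_le_one.trans hq₁.le) hq).and (eventually_gt_atTop 0)).exists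
  have hdecay : Φ =O[atTop] fun r ↦ r ^ (-q) := by
    refine .of_bound (2 ^ q * (T ^ q * Φ T)) ?_
    filter_upwards [eventually_ge_atTop T] with r hr
    have hr₀ : 0 < r := hT₀.trans_le hr
    rw [norm_of_nonneg (hpos r hr₀).le, norm_of_nonneg (rpow_nonneg hr₀.le _), rpow_neg hr₀.le,
      ← div_eq_mul_inv, le_div_iff₀ (rpow_pos_of_pos hr₀ q), mul_comm]
    exact hT r hr
  refine IntegrableOn.mono_set ?_ Ioi_subset_Ici_self
  exact (hanti.locallyIntegrable.locallyIntegrableOn _).integrableOn_of_isBigO_atTop hdecay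
    ⟨Ioi 1, Ioi_mem_atTop 1, integrableOn_Ioi_rpow_of_lt (neg_lt_neg hq₁) one_pos⟩

end RegularlyVarying

section OneSubExp

open Set

variable {α s : ℝ}

lemma one_sub_exp_neg_nonneg (hs : 0 ≤ s) : 0 ≤ 1 - exp (-s) := by
  simpa using hs

lemma one_sub_exp_neg_le_one (s : ℝ) : 1 - exp (-s) ≤ 1 :=
  sub_le_self _ (exp_pos _).le

lemma one_sub_exp_neg_le_self (s : ℝ) : 1 - exp (-s) ≤ s := by
  linarith [add_one_le_exp (-s)]

lemma integrableOn_one_sub_exp_neg_mul_rpow (hα₁ : 1 < α) (hα₂ : α < 2) :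
    IntegrableOn (fun s ↦ (1 - exp (-s)) * s ^ (-α)) (Ioi 0) := by
  have hcont : Continuous fun s : ℝ ↦ 1 - exp (-s) := by fun_prop
  have hMellin := mellin_convergent_of_isBigO_scalar (a := 0) (b := -1) (s := 1 - α)
    (hcont.locallyIntegrable.locallyIntegrableOn _)
    (.of_bound 1 ?_) (by linarith) (.of_bound 1 ?_) (by linarith)
  · simpa only [sub_sub_cancel_left, mul_comm] using hMellin
  · filter_upwards [eventually_ge_atTop 0] with s hs
    simpa [abs_of_nonneg (one_sub_exp_neg_nonneg hs)] using one_sub_exp_neg_le_one s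
  · filter_upwards [self_mem_nhdsWithin] with s (hs : 0 < s)
    simpa [abs_of_nonneg (one_sub_exp_neg_nonneg hs.le), abs_of_pos hs] using
      one_sub_exp_neg_le_self s

lemma tendsto_one_sub_exp_neg_mul_rpow_nhdsGT_zero (hα : α < 2) :
    Tendsto (fun s ↦ (1 - exp (-s)) * s ^ (1 - α)) (𝓝[>] 0) (𝓝 0) := by
  have hpow : Tendsto (fun s : ℝ ↦ s ^ (2 - α)) (𝓝[>] 0) (𝓝 0) := by
    have hα' : 0 < 2 - α := sub_pos.2 hα
    simpa [zero_rpow hα'.ne'] using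
      (continuousAt_rpow_const 0 (2 - α) (.inr hα'.le)).tendsto.mono_left nhdsWithin_le_nhds
  refine squeeze_zero' ?_ ?_ hpow <;> filter_upwards [self_mem_nhdsWithin] with s (hs : 0 < s)
  · exact mul_nonneg (one_sub_exp_neg_nonneg hs.le) (rpow_nonneg hs.le _)
  · calc (1 - exp (-s)) * s ^ (1 - α) ≤ s * s ^ (1 - α) := by
          gcongr
          exact one_sub_exp_neg_le_self s
      _ = s ^ (2 - α) := by
          rw [← rpow_one_add' hs.le (by linarith)]
          ring_nf

lemma tendsto_one_sub_exp_neg_mul_rpow_atTop (hα : 1 < α) :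
    Tendsto (fun s ↦ (1 - exp (-s)) * s ^ (1 - α)) atTop (𝓝 0) := by
  have hpow : Tendsto (fun s : ℝ ↦ s ^ (1 - α)) atTop (𝓝 0) := by
    simpa using tendsto_rpow_neg_atTop (sub_pos.2 hα)
  simpa using (tendsto_exp_neg_atTop_nhds_zero.const_sub 1).mul hpow

theorem integral_one_sub_exp_neg_mul_rpow (hα₁ : 1 < α) (hα₂ : α < 2) :
    ∫ s in Ioi 0, (1 - exp (-s)) * s ^ (-α) = Gamma (2 - α) / (α - 1) := by
  have hα : 1 - α ≠ 0 := by linarith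
  have hGamma := GammaIntegral_convergent (sub_pos.2 hα₂)
  have hexp : 2 - α - 1 = 1 - α := by ring
  rw [hexp] at hGamma
  have hparts := integral_Ioi_mul_deriv_eq_deriv_mul (a := 0) (a' := 0 / (1 - α))
    (b' := 0 / (1 - α))
    (u := fun s ↦ 1 - exp (-s)) (u' := fun s ↦ exp (-s))
    (v := fun s ↦ s ^ (1 - α) / (1 - α)) (v' := fun s ↦ s ^ (-α))
    (fun s _ ↦ by simpa using (hasDerivAt_id s).neg.exp.const_sub 1)
    (fun s (hs : 0 < s) ↦ by
      simpa [hα] using (hasDerivAt_rpow_const (p := 1 - α) (.inl hs.ne')).div_const (1 - α))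
    (integrableOn_one_sub_exp_neg_mul_rpow hα₁ hα₂)
    ((hGamma.div_const (1 - α)).congr (.of_forall fun s ↦ by simp [mul_div_assoc]))
    (by simpa only [Pi.mul_def, mul_div_assoc] using
      (tendsto_one_sub_exp_neg_mul_rpow_nhdsGT_zero hα₂).div_const (1 - α))
    (by simpa only [Pi.mul_def, mul_div_assoc] using
      (tendsto_one_sub_exp_neg_mul_rpow_atTop hα₁).div_const (1 - α))
  simp only [sub_self, zero_sub, ← mul_div_assoc] at hparts
  rw [hparts, integral_div, ← div_neg, neg_sub, Gamma_eq_integral (sub_pos.2 hα₂), hexp]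

end OneSubExp

/-- The compensated Laplace transform `E (exp (-Y / r) - 1 + Y / r)` of a nonnegative random
variable `Y` with tail function `F`, integrated by parts so that it depends on `F` only. It is a
function of the scale `r`, rather than of `1 / r`, in order to vary regularly at infinity as `F`
does. -/
noncomputable def compensatedLaplace (F : ℝ → ℝ) (r : ℝ) : ℝ :=
  ∫ s in Set.Ioi 0, (1 - exp (-s)) * F (s * r)

namespace compensatedLaplace

open Set

variable {F : ℝ → ℝ} {α r : ℝ}

lemma integrableOn (hF : IntegrableOn F (Ioi 0)) (hr : 0 < r) :
    IntegrableOn (fun s ↦ (1 - exp (-s)) * F (s * r)) (Ioi 0) := by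
  have hscaled : IntegrableOn (fun s ↦ F (s * r)) (Ioi 0) :=
    (integrableOn_Ioi_comp_mul_right_iff F 0 hr).2 (by simpa using hF)
  refine hscaled.bdd_mul (c := 1) (by fun_prop) ?_
  filter_upwards [self_mem_ae_restrict measurableSet_Ioi] with s (hs : 0 < s)
  simpa [abs_of_nonneg (one_sub_exp_neg_nonneg hs.le)] using one_sub_exp_neg_le_one s

lemma antitoneOn (hanti : AntitoneOn F (Ioi 0)) (hF : IntegrableOn F (Ioi 0)) :
    AntitoneOn (compensatedLaplace F) (Ioi 0) := by
  intro a (ha : 0 < a) b (hb : 0 < b) hab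
  refine setIntegral_mono_on (integrableOn hF hb) (integrableOn hF ha) measurableSet_Ioi
    fun s (hs : 0 < s) ↦ ?_
  have := one_sub_exp_neg_nonneg hs.le
  gcongr
  exact hanti (mul_pos hs ha) (mul_pos hs hb) (by gcongr)

lemma mul_le_integral (hF₀ : ∀ r, 0 < r → 0 ≤ F r) (hF : IntegrableOn F (Ioi 0)) (hr : 0 < r) :
    r * compensatedLaplace F r ≤ ∫ t in Ioi 0, F t := by
  have hscaled : IntegrableOn (fun s ↦ F (s * r)) (Ioi 0) :=
    (integrableOn_Ioi_comp_mul_right_iff F 0 hr).2 (by simpa using hF)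
  calc r * compensatedLaplace F r ≤ r * ∫ s in Ioi 0, F (s * r) := by
        gcongr
        refine setIntegral_mono_on (integrableOn hF hr) hscaled measurableSet_Ioi
          fun s (hs : 0 < s) ↦ ?_
        exact mul_le_of_le_one_left (hF₀ _ (mul_pos hs hr)) (one_sub_exp_neg_le_one s)
    _ = ∫ t in Ioi 0, F t := by
        rw [integral_comp_mul_right_Ioi F 0 hr, zero_mul, smul_eq_mul, mul_inv_cancel_left₀ hr.ne']

lemma measurable (hF : Measurable F) : Measurable (compensatedLaplace F) :=
  (StronglyMeasurable.integral_prod_right (ν := volume.restrict (Ioi 0))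
    (f := fun r s ↦ (1 - exp (-s)) * F (s * r))
    (Measurable.stronglyMeasurable (by fun_prop))).measurable

theorem tendsto_div (hF : RegularlyVarying F (-α)) (hanti : Antitone F)
    (hpos : ∀ r, 0 < r → 0 < F r) (hα₁ : 1 < α) (hα₂ : α < 2) :
    Tendsto (fun r ↦ compensatedLaplace F r / F r) atTop (𝓝 (Gamma (2 - α) / (α - 1))) := by
  obtain ⟨q, hq₁, hq⟩ := exists_between hα₁
  obtain ⟨p, hp, hp₂⟩ := exists_between hα₂
  have hbdd (b : ℝ) : ∃ M, ∀ a, 0 < a → a ≤ b → a ^ p * F a ≤ M := by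
    refine ⟨b ^ p * F 0, fun a ha hab ↦ ?_⟩
    exact mul_le_mul (rpow_le_rpow ha.le hab (by linarith)) (hanti ha.le) (hpos a ha).le
      (rpow_nonneg (ha.le.trans hab) p)
  rw [← integral_one_sub_exp_neg_mul_rpow hα₁ hα₂]
  refine (hF.tendsto_integral_mul_div (ν := volume.restrict (Ioi 0)) (hanti.antitoneOn _) hpos hbdd
    hanti.measurable (zero_le_one.trans hq₁.le) hq hp
    (Continuous.aestronglyMeasurable (by fun_prop))
    measurable_id.aemeasurable (ae_restrict_mem measurableSet_Ioi)
    (integrableOn_one_sub_exp_neg_mul_rpow (hα₁.trans hp) hp₂)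
    (integrableOn_one_sub_exp_neg_mul_rpow hq₁ (hq.trans hα₂))).congr fun r ↦ ?_
  simp only [id_eq, ← mul_div_assoc, integral_div, compensatedLaplace]

lemma pos (hF : RegularlyVarying F (-α)) (hanti : Antitone F) (hpos : ∀ r, 0 < r → 0 < F r)
    (hα₁ : 1 < α) (hα₂ : α < 2) (hr : 0 < r) : 0 < compensatedLaplace F r := by
  have hlim : 0 < Gamma (2 - α) / (α - 1) :=
    div_pos (Gamma_pos_of_pos (sub_pos.2 hα₂)) (sub_pos.2 hα₁)
  obtain ⟨b, hb, hrb⟩ := (((tendsto_div hF hanti hpos hα₁ hα₂).eventually_const_lt hlim).and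
    (eventually_ge_atTop r)).exists
  have hb₀ : 0 < b := hr.trans_le hrb
  calc 0 < compensatedLaplace F b := (div_pos_iff_of_pos_right (hpos b hb₀)).1 hb
    _ ≤ compensatedLaplace F r :=
      antitoneOn (hanti.antitoneOn _) (hF.integrableOn_Ioi hanti hpos hα₁) hr hb₀ hrb

lemma regularlyVarying (hF : RegularlyVarying F (-α)) (hanti : Antitone F)
    (hpos : ∀ r, 0 < r → 0 < F r) (hα₁ : 1 < α) (hα₂ : α < 2) :
    RegularlyVarying (compensatedLaplace F) (-α) :=
  hF.of_tendsto_div ((eventually_gt_atTop 0).mono fun r hr ↦ (hpos r hr).ne')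
    (div_pos (Gamma_pos_of_pos (sub_pos.2 hα₂)) (sub_pos.2 hα₁)).ne'
    (tendsto_div hF hanti hpos hα₁ hα₂)

theorem tendsto_integral_div {X : Type*} [MeasurableSpace X] {ν : Measure X} {s : X → ℝ} {p q : ℝ}
    (hF : RegularlyVarying F (-α)) (hanti : Antitone F) (hpos : ∀ r, 0 < r → 0 < F r)
    (hα₁ : 1 < α) (hα₂ : α < 2) (hq₀ : 0 ≤ q) (hq : q < α) (hp : α < p)
    (hs : AEMeasurable s ν) (hs₀ : ∀ᵐ x ∂ν, 0 < s x)
    (hsp : Integrable (fun x ↦ s x ^ (-p)) ν) (hsq : Integrable (fun x ↦ s x ^ (-q)) ν) :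
    Tendsto (fun r ↦ (∫ x, compensatedLaplace F (s x * r) ∂ν) / compensatedLaplace F r) atTop
      (𝓝 (∫ x, s x ^ (-α) ∂ν)) := by
  have hint : IntegrableOn F (Ioi 0) := hF.integrableOn_Ioi hanti hpos hα₁
  have hp₁ : 0 ≤ p - 1 := by linarith
  have hbdd (b : ℝ) : ∃ M, ∀ a, 0 < a → a ≤ b → a ^ p * compensatedLaplace F a ≤ M := by
    refine ⟨b ^ (p - 1) * ∫ t in Ioi 0, F t, fun a ha hab ↦ ?_⟩
    calc a ^ p * compensatedLaplace F a = a ^ (p - 1) * (a * compensatedLaplace F a) := by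
          rw [← mul_assoc, ← rpow_add_one ha.ne', sub_add_cancel]
      _ ≤ b ^ (p - 1) * ∫ t in Ioi 0, F t :=
          mul_le_mul (rpow_le_rpow ha.le hab hp₁)
            (mul_le_integral (fun t ht ↦ (hpos t ht).le) hint ha)
            (mul_pos ha (pos hF hanti hpos hα₁ hα₂ ha)).le (rpow_nonneg (ha.le.trans hab) _)
  simpa only [one_mul, integral_div] using
    (regularlyVarying hF hanti hpos hα₁ hα₂).tendsto_integral_mul_div (w := fun _ ↦ 1)
      (antitoneOn (hanti.antitoneOn _) hint) (fun _ ↦ pos hF hanti hpos hα₁ hα₂) hbdd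
      (measurable hanti.measurable) hq₀ hq hp aestronglyMeasurable_const hs hs₀
      (by simpa only [one_mul] using hsp) (by simpa only [one_mul] using hsq)

end compensatedLaplace

lemma integral_one_sub_exp_neg (t : ℝ) :
    ∫ s in (0 : ℝ)..t, (1 - exp (-s)) = exp (-t) - 1 + t := by
  have hexp : IntervalIntegrable (fun s ↦ exp (-s)) volume 0 t :=
    Continuous.intervalIntegrable (by fun_prop) _ _
  rw [intervalIntegral.integral_sub intervalIntegrable_const hexp,
    intervalIntegral.integral_comp_neg, integral_exp]
  simp
  ring

theorem integral_exp_neg_div_sub_one_add_div (μ : Measure ℝ) [IsFiniteMeasure μ]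
    (hμ : μ (Set.Iio 0) = 0) {r : ℝ} (hr : 0 < r) :
    ∫ t, (exp (-(t / r)) - 1 + t / r) ∂μ
      = compensatedLaplace (fun t ↦ μ.real (Set.Ioi t)) r := by
  have hnonneg : ∀ᵐ t ∂μ, 0 ≤ t / r := by
    filter_upwards [measure_eq_zero_iff_ae_notMem.1 hμ] with t ht
    exact div_nonneg (not_lt.1 ht) hr.le
  have hweight : ∀ᵐ s ∂volume.restrict (Set.Ioi (0 : ℝ)), 0 ≤ 1 - exp (-s) := by
    filter_upwards [self_mem_ae_restrict measurableSet_Ioi] with s (hs : 0 < s)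
    exact one_sub_exp_neg_nonneg hs.le
  have hlayer := lintegral_comp_eq_lintegral_meas_lt_mul μ hnonneg (by fun_prop)
    (fun t _ ↦ Continuous.intervalIntegrable (by fun_prop) 0 t) hweight
  have htail : Measurable fun t ↦ μ.real (Set.Ioi t) :=
    Antitone.measurable fun a b hab ↦ measureReal_mono (Set.Ioi_subset_Ioi hab)
  rw [compensatedLaplace, integral_eq_lintegral_of_nonneg_ae, integral_eq_lintegral_of_nonneg_ae]
  · simp only [integral_one_sub_exp_neg] at hlayer
    rw [hlayer]
    congr 1
    refine lintegral_congr_ae ?_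
    filter_upwards [hweight] with s hs
    have hset : {t : ℝ | s < t / r} = Set.Ioi (s * r) := by
      ext t
      exact lt_div_iff₀ hr
    rw [hset, ENNReal.ofReal_mul hs, ofReal_measureReal, mul_comm]
  · filter_upwards [hweight] with s hs using mul_nonneg hs measureReal_nonneg
  · exact (Measurable.mul (by fun_prop) (htail.comp (by fun_prop))).aestronglyMeasurable
  · refine .of_forall fun t ↦ ?_
    change 0 ≤ exp (-(t / r)) - 1 + t / r
    linarith [one_sub_exp_neg_le_self (t / r)]
  · exact Measurable.aestronglyMeasurable (by fun_prop)

lemma integral_integral_eq_setIntegral_compensatedLaplace {X : Type*} [MeasurableSpace X]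
    {ν : Measure X} (μ : Measure ℝ) [IsFiniteMeasure μ] (hμ : μ (Set.Iio 0) = 0) {ξ : X → ℝ}
    (hξ : AEMeasurable ξ ν) (hξ₀ : ∀ᵐ x ∂ν, 0 ≤ ξ x) {r : ℝ} (hr : 0 < r) :
    ∫ x, ∫ t, (exp (-(ξ x * t / r)) - 1 + ξ x * t / r) ∂μ ∂ν
      = ∫ x in {x | 0 < ξ x}, compensatedLaplace (fun t ↦ μ.real (Set.Ioi t)) ((ξ x)⁻¹ * r) ∂ν := by
  rw [← setIntegral_eq_integral_of_ae_compl_eq_zero (s := {x | 0 < ξ x})]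
  · refine integral_congr_ae ?_
    filter_upwards [ae_restrict_mem₀ (nullMeasurableSet_lt aemeasurable_const hξ)]
      with x (hx : 0 < ξ x)
    rw [← integral_exp_neg_div_sub_one_add_div μ hμ (mul_pos (inv_pos.2 hx) hr)]
    have hscale (t : ℝ) : t / ((ξ x)⁻¹ * r) = ξ x * t / r := by field_simp
    simp only [hscale]
  · filter_upwards [hξ₀] with x hx hx'
    simp [le_antisymm (not_lt.1 hx') hx]

lemma integrable_rpow_of_le {X : Type*} [MeasurableSpace X] {ν : Measure X}
    {f : X → ℝ} {B p : ℝ} (hf : Integrable f ν) (hf₀ : ∀ᵐ x ∂ν, 0 ≤ f x) (hB : ∀ᵐ x ∂ν, f x ≤ B)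
    (hp : 1 ≤ p) : Integrable (fun x ↦ f x ^ p) ν := by
  refine (hf.const_mul (B ^ (p - 1))).mono' (hf.aemeasurable.pow_const p).aestronglyMeasurable ?_
  filter_upwards [hf₀, hB] with x hx hxB
  calc ‖f x ^ p‖ = f x ^ (p - 1) * f x := by
        rw [norm_of_nonneg (rpow_nonneg hx p), ← rpow_add_one' hx (by linarith), sub_add_cancel]
    _ ≤ B ^ (p - 1) * f x := by gcongr

theorem stmt_5_general {X : Type*} [MeasurableSpace X] (ν : Measure X) {α p q : ℝ}
    (hα₁ : 1 < α) (hα₂ : α < 2) (hq₀ : 0 ≤ q) (hq : q < α) (hp : α < p)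
    (μ : Measure ℝ) [IsFiniteMeasure μ] (hμ : μ (Set.Iio 0) = 0)
    (hpos : ∀ t, 0 ≤ t → 0 < μ.real (Set.Ioi t))
    (hRV : RegularlyVarying (fun t ↦ μ.real (Set.Ioi t)) (-α))
    (g : ℝ → ℝ) (hgtop : Tendsto g atTop atTop)
    (hginv : Tendsto (fun lam ↦ lam * μ.real (Set.Ioi (g lam))) atTop (𝓝 1))
    (ξ : X → ℝ) (hξ : AEMeasurable ξ ν) (hξ₀ : ∀ᵐ x ∂ν, 0 ≤ ξ x)
    (hξp : Integrable (fun x ↦ ξ x ^ p) ν) (hξq : Integrable (fun x ↦ ξ x ^ q) ν) :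
    Tendsto (fun lam ↦ lam * ∫ x, ∫ t, (exp (-(ξ x * t / g lam)) - 1 + ξ x * t / g lam) ∂μ ∂ν)
      atTop (𝓝 (Gamma (2 - α) / (α - 1) * ∫ x, ξ x ^ α ∂ν)) := by
  set F : ℝ → ℝ := fun t ↦ μ.real (Set.Ioi t)
  have hanti : Antitone F := fun a b hab ↦ measureReal_mono (Set.Ioi_subset_Ioi hab)
  have hpos' (t : ℝ) (ht : 0 < t) : 0 < F t := hpos t ht.le
  have hnormalized : Tendsto (fun lam ↦ lam * compensatedLaplace F (g lam)) atTop
      (𝓝 (Gamma (2 - α) / (α - 1))) := by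
    rw [← one_mul (Gamma _ / _)]
    refine (hginv.mul
      ((compensatedLaplace.tendsto_div hRV hanti hpos' hα₁ hα₂).comp hgtop)).congr' ?_
    filter_upwards [hgtop.eventually_gt_atTop 0] with lam hlam
    rw [Function.comp_apply, mul_assoc, mul_div_cancel₀ _ (hpos' _ hlam).ne']
  have hfield := compensatedLaplace.tendsto_integral_div (ν := ν.restrict {x | 0 < ξ x})
    (s := fun x ↦ (ξ x)⁻¹) hRV hanti hpos' hα₁ hα₂ hq₀ hq hp hξ.inv.restrict
    ((ae_restrict_mem₀ (nullMeasurableSet_lt aemeasurable_const hξ)).mono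
      fun x (hx : 0 < ξ x) ↦ inv_pos.2 hx)
    (by simpa only [rpow_neg_eq_inv_rpow, inv_inv] using hξp.restrict)
    (by simpa only [rpow_neg_eq_inv_rpow, inv_inv] using hξq.restrict)
  have hvanish : ∀ᵐ x ∂ν, x ∉ {x | 0 < ξ x} → ξ x ^ α = 0 := by
    filter_upwards [hξ₀] with x hx hx'
    rw [le_antisymm (not_lt.1 hx') hx, zero_rpow (zero_lt_one.trans hα₁).ne']
  simp only [rpow_neg_eq_inv_rpow, inv_inv] at hfield
  rw [setIntegral_eq_integral_of_ae_compl_eq_zero hvanish] at hfield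
  refine (hnormalized.mul (hfield.comp hgtop)).congr' ?_
  filter_upwards [hgtop.eventually_gt_atTop 0] with lam hlam
  rw [integral_integral_eq_setIntegral_compensatedLaplace μ hμ hξ hξ₀ hlam, Function.comp_apply,
    mul_assoc,
    mul_div_cancel₀ _ (compensatedLaplace.pos hRV hanti hpos' hα₁ hα₂ hlam).ne']

/-- Analytic core of the α-stable scaling limit of the Poisson shot-noise field with
regularly varying amplitude distribution. -/
theorem stmt_5 (d : ℕ) (hd : 0 < d) (α : ℝ) (hα₁ : 1 < α) (hα₂ : α < 2)
    (μ : Measure ℝ) [IsProbabilityMeasure μ] (hμsupp : μ (Set.Iio 0) = 0)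
    (F : ℝ → ℝ) (hF : ∀ t, F t = (μ (Set.Ioi t)).toReal)
    (hFpos : ∀ t : ℝ, 0 ≤ t → 0 < F t)
    (hRV : ∀ c : ℝ, 0 < c →
      Tendsto (fun t => F (c * t) / F t) atTop (𝓝 (c ^ (-α))))
    (g : ℝ → ℝ) (hgpos : ∀ lam : ℝ, 0 < lam → 0 < g lam)
    (hgtop : Tendsto g atTop atTop)
    (hginv : Tendsto (fun lam => lam * F (g lam)) atTop (𝓝 1))
    (ξ : (Fin d → ℝ) → ℝ) (hξmeas : Measurable ξ) (hξnn : ∀ x, 0 ≤ ξ x)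
    (B : ℝ) (hξbd : ∀ x, ξ x ≤ B) (hξint : Integrable ξ) :
    Tendsto
      (fun lam : ℝ =>
        lam * ∫ x, ∫ t,
          (Real.exp (-(ξ x * t / g lam)) - 1 + ξ x * t / g lam) ∂μ)
      atTop
      (𝓝 ((Real.Gamma (2 - α) / (α - 1)) * ∫ x, (ξ x) ^ α)) := by
  obtain rfl : F = fun t ↦ μ.real (Set.Ioi t) := funext hF
  exact stmt_5_general volume hα₁ hα₂ zero_le_one hα₁ hα₂ μ hμsupp hFpos hRV g hgtop hginv ξ
    hξmeas.aemeasurable (.of_forall hξnn)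
    (integrable_rpow_of_le hξint (.of_forall hξnn) (.of_forall hξbd) one_le_two)
    (by simpa only [rpow_one] using hξint)
end
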